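/- For any nonzero polynomials M, N ∈ F_p[t], the Carlitz polynomials satisfy [MN](x) = [M]([N](x)). -/

import Mathlib

open Polynomial

/-- The image of `F_p[t]` in an extension `L` of `F_p(t)`. -/
noncomputable def carlitzMap (p : ℕ) [Fact p.Prime] (L : Type*) [Field L]
    [Algebra (RatFunc (ZMod p)) L] : Polynomial (ZMod p) →+* L :=
  (algebraMap (RatFunc (ZMod p)) L).comp (algebraMap (Polynomial (ZMod p)) (RatFunc (ZMod p)))

/-- The basic Carlitz operator `[t](x) = x^p + t·x`. -/
noncomputable def carlitzT (p : ℕ) [Fact p.Prime] (L : Type*) [Field L]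
    [Algebra (RatFunc (ZMod p)) L] (x : L) : L :=
  x ^ p + carlitzMap p L X * x

/-- The Carlitz polynomial action: `[M](x)`, defined by `[t^n](x) = [t]([t^{n-1}](x))`
and `F_p`-linear extension in `M`. -/
noncomputable def carlitz (p : ℕ) [Fact p.Prime] (L : Type*) [Field L]
    [Algebra (RatFunc (ZMod p)) L] (M : Polynomial (ZMod p)) (x : L) : L :=
  ∑ i ∈ M.support, carlitzMap p L (C (M.coeff i)) * (carlitzT p L)^[i] x

/-- The Carlitz operator `x ↦ x ^ q + t * x`, where `q = #K`, as a `K`-linear endomorphism of a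
commutative `K`-algebra. Linearity comes from that of the Frobenius, and the Carlitz action of a
polynomial `M` is the evaluation of `M` at this endomorphism. -/
noncomputable def carlitzEnd (K : Type*) [Field K] [Fintype K] {R : Type*} [CommRing R]
    [Algebra K R] (t : R) : Module.End K R :=
  (FiniteField.frobeniusAlgHom K R).toLinearMap + LinearMap.mulLeft K t

theorem carlitzEnd_apply {K : Type*} [Field K] [Fintype K] {R : Type*} [CommRing R]
    [Algebra K R] (t x : R) : carlitzEnd K t x = x ^ Fintype.card K + t * x :=
  rfl

section

variable {p : ℕ} [Fact p.Prime] {L : Type*} [Field L] [Algebra (RatFunc (ZMod p)) L]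
  [Algebra (ZMod p) L]

theorem carlitzMap_C (c : ZMod p) : carlitzMap p L (C c) = algebraMap (ZMod p) L c :=
  DFunLike.congr_fun (Subsingleton.elim ((carlitzMap p L).comp C) (algebraMap (ZMod p) L)) c

theorem carlitzT_eq_carlitzEnd : carlitzT p L = carlitzEnd (ZMod p) (carlitzMap p L X) := by
  ext x
  rw [carlitzT, carlitzEnd_apply, ZMod.card]

theorem carlitz_eq_aeval (M : Polynomial (ZMod p)) (x : L) :
    carlitz p L M x = aeval (carlitzEnd (ZMod p) (carlitzMap p L X)) M x := by
  simp only [carlitz, aeval_endomorphism, Polynomial.sum_def, carlitzMap_C,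
    carlitzT_eq_carlitzEnd, Module.End.pow_apply, Algebra.smul_def]

end

/-- `[MN](x) = [M]([N](x))` for nonzero `M, N`. -/
theorem carlitz_mul (p : ℕ) [Fact p.Prime] (L : Type*) [Field L]
    [Algebra (RatFunc (ZMod p)) L] (M N : Polynomial (ZMod p))
    (hM : M ≠ 0) (hN : N ≠ 0) (x : L) :
    carlitz p L (M * N) x = carlitz p L M (carlitz p L N x) := by
  let _ : Algebra (ZMod p) L := ((carlitzMap p L).comp C).toAlgebra
  simp only [carlitz_eq_aeval, map_mul, Module.End.mul_apply]
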